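/- arXiv:math/0503505 — 4 statements merged into one kernel-verified Lean document; each statement's English description precedes it below -/
import Mathlib

section
/- Let k ≥ 1 be an integer and let b : ℝ × ℝ → ℝ be smooth and compactly supported. For ξ ∈ ℂ with Re ξ < 1/k, define F(ξ) = ∫_0^∞ ∫_0^∞ (y₁ y₂^k)^{-ξ} b(y₁, y₂) dy₁ dy₂ (the integral converges absolutely there). Then F extends to a meromorphic function on all of ℂ whose poles are contained in the set { j/k : j ∈ ℕ, j ≥ 1 }; the pole at a point ξ₀ = j/k has order at most 2 if ξ₀ is a positive integer, and order at most 1 otherwise. -/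
open MeasureTheory

/-!
Let `M b (s₁, s₂)` be the Mellin transform of `b` over the quadrant. Integrating by parts once in
each variable gives `s₁ s₂ M b (s) = M (∂₁∂₂b) (s + (1, 1))`, which is also the recurrence satisfied
by `Γ(s₁) Γ(s₂)`. Hence `M b (s) / (Γ(s₁) Γ(s₂))` does not change when `(b, s)` is replaced by
`(∂₁∂₂b, s + (1, 1))`, and iterating this extends it to an entire function on `ℂ²`. Restricted to
the line `s = (1 - ξ, 1 - kξ)`, where `M b (s) = F(ξ)`, it exhibits the poles of `F` as
poles of `Γ(1 - ξ) Γ(1 - kξ)`.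
-/

open Set Filter Topology

variable {E : Type*} [NormedAddCommGroup E]

section Gluing

variable {𝕜 V α β : Type*}

lemma exists_eqOn_of_forall_eqOn_succ {U : ℕ → Set α} (hU : Monotone U) (hcover : ⋃ n, U n = univ)
    {f : ℕ → α → β} (hf : ∀ n, EqOn (f n) (f (n + 1)) (U n)) :
    ∃ F : α → β, ∀ n, EqOn F (f n) (U n) := by
  classical
  have hle : ∀ {m n : ℕ}, m ≤ n → EqOn (f m) (f n) (U m) := fun {m n} hmn => by
    induction n, hmn using Nat.le_induction with
    | base => exact eqOn_refl _ _
    | succ n hmn ih => exact ih.trans ((hf n).mono (hU hmn))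
  have hmem : ∀ x, ∃ n, x ∈ U n := iUnion_eq_univ_iff.1 hcover
  exact ⟨fun x => f (Nat.find (hmem x)) x, fun n x hx =>
    hle (Nat.find_min' (hmem x) hx) (Nat.find_spec (hmem x))⟩

lemma exists_differentiable_eqOn_of_forall_eqOn_succ [NontriviallyNormedField 𝕜]
    [NormedAddCommGroup V] [NormedSpace 𝕜 V] [NormedSpace 𝕜 E] {U : ℕ → Set V}
    (hUo : ∀ n, IsOpen (U n)) (hU : Monotone U) (hcover : ⋃ n, U n = univ) {f : ℕ → V → E}
    (hf : ∀ n, DifferentiableOn 𝕜 (f n) (U n)) (hstep : ∀ n, EqOn (f n) (f (n + 1)) (U n)) :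
    ∃ F : V → E, Differentiable 𝕜 F ∧ ∀ n, EqOn F (f n) (U n) := by
  obtain ⟨F, hF⟩ := exists_eqOn_of_forall_eqOn_succ hU hcover hstep
  refine ⟨F, fun x => ?_, hF⟩
  obtain ⟨n, hn⟩ := iUnion_eq_univ_iff.1 hcover x
  have hnhds := (hUo n).mem_nhds hn
  exact ((hf n).differentiableAt hnhds).congr_of_eventuallyEq ((hF n).eventuallyEq_of_mem hnhds)

end Gluing

section Meromorphic

variable {𝕜 : Type*} [NontriviallyNormedField 𝕜] [NormedSpace 𝕜 E]

lemma exists_analyticAt_eq_pow_smul {f : 𝕜 → E} {c : 𝕜} {m : ℕ} (hf : MeromorphicAt f c)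
    (hm : -m ≤ meromorphicOrderAt f c) :
    ∃ H : 𝕜 → E, AnalyticAt 𝕜 H c ∧ ∀ z, z ≠ c → H z = (z - c) ^ m • f z := by
  classical
  have hpow : MeromorphicAt ((· - c) ^ m) c := by fun_prop
  have horder : 0 ≤ meromorphicOrderAt ((· - c) ^ m • f) c := by
    rw [meromorphicOrderAt_smul hpow hf, meromorphicOrderAt_pow_id_sub_const,
      ← LinearOrderedAddCommGroupWithTop.add_neg_cancel_of_ne_top (WithTop.natCast_ne_top m)]
    gcongr
  obtain ⟨g, hg, hfg⟩ := (hpow.smul hf).meromorphicOrderAt_nonneg_iff.1 horder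
  refine ⟨Function.update ((· - c) ^ m • f) c (g c), hg.congr ?_,
    fun z hz => Function.update_of_ne hz _ _⟩
  filter_upwards [eventually_nhdsWithin_iff.1 hfg] with z hz
  rcases eq_or_ne z c with rfl | hne
  · simp
  · rw [Function.update_of_ne hne, hz hne]

end Meromorphic

section Gamma

lemma analyticAt_Gamma {z : ℂ} (hz : ∀ m : ℕ, z ≠ -m) : AnalyticAt ℂ Complex.Gamma z :=
  (Meromorphic.Gamma z).analyticAt (Complex.continuousAt_Gamma z hz)

lemma meromorphicOrderAt_Gamma_zero : meromorphicOrderAt Complex.Gamma 0 = -1 := by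
  have horder : meromorphicOrderAt (id * Complex.Gamma) 0 = 0 :=
    (tendsto_ne_zero_iff_meromorphicOrderAt_eq_zero
      (analyticAt_id.meromorphicAt.mul (Meromorphic.Gamma 0))).1
      ⟨1, one_ne_zero, Complex.tendsto_self_mul_Gamma_nhds_zero⟩
  rw [meromorphicOrderAt_mul analyticAt_id.meromorphicAt (Meromorphic.Gamma 0),
    meromorphicOrderAt_id] at horder
  exact (neg_eq_of_add_eq_zero_right horder).symm

lemma meromorphicOrderAt_Gamma_add_one {z : ℂ} (hz : z ≠ 0) :
    meromorphicOrderAt Complex.Gamma (z + 1) = meromorphicOrderAt Complex.Gamma z := by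
  have hrec : (fun w => Complex.Gamma (w + 1)) =ᶠ[𝓝[≠] z] id * Complex.Gamma :=
    (eventually_ne_nhdsWithin hz).mono Complex.Gamma_add_one
  have hid : meromorphicOrderAt id z = 0 :=
    (tendsto_ne_zero_iff_meromorphicOrderAt_eq_zero analyticAt_id.meromorphicAt).1
      ⟨z, hz, tendsto_id.mono_left nhdsWithin_le_nhds⟩
  rw [← meromorphicOrderAt_fun_comp_add_const_eq_meromorphicOrderAt, meromorphicOrderAt_congr hrec,
    meromorphicOrderAt_mul analyticAt_id.meromorphicAt (Meromorphic.Gamma z), hid, zero_add]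

lemma meromorphicOrderAt_Gamma_neg_nat (n : ℕ) :
    meromorphicOrderAt Complex.Gamma (-n) = -1 := by
  induction n with
  | zero => simpa using meromorphicOrderAt_Gamma_zero
  | succ n ih =>
    rw [← ih, ← meromorphicOrderAt_Gamma_add_one
      (neg_ne_zero.2 (Nat.cast_ne_zero.2 n.succ_ne_zero)), Nat.cast_succ, neg_add_rev,
      neg_add_cancel_comm]

lemma neg_one_le_meromorphicOrderAt_Gamma (z : ℂ) : -1 ≤ meromorphicOrderAt Complex.Gamma z := by
  by_cases hz : ∃ m : ℕ, z = -m
  · obtain ⟨m, rfl⟩ := hz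
    exact (meromorphicOrderAt_Gamma_neg_nat m).ge
  · push Not at hz
    exact le_trans (by decide) (analyticAt_Gamma hz).meromorphicOrderAt_nonneg

lemma neg_one_le_meromorphicOrderAt_Gamma_one_sub_mul {a : ℂ} (ha : a ≠ 0) (z : ℂ) :
    -1 ≤ meromorphicOrderAt (fun z => Complex.Gamma (1 - a * z)) z :=
  (neg_one_le_meromorphicOrderAt_Gamma (1 - a * z)).trans_eq
    (meromorphicOrderAt_comp_of_deriv_ne_zero (f := Complex.Gamma) (g := fun z => 1 - a * z)
      (by fun_prop) (by simpa [deriv_const_sub, deriv_const_mul_field] using ha)).symm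

lemma meromorphicAt_Gamma_one_sub_mul (a z : ℂ) :
    MeromorphicAt (fun z => Complex.Gamma (1 - a * z)) z :=
  (Meromorphic.Gamma _).comp_analyticAt (f := Complex.Gamma) (g := fun z => 1 - a * z) (by fun_prop)

lemma analyticAt_Gamma_one_sub_mul {a : ℂ} (ha : a ≠ 0) {z : ℂ} (hz : ∀ j : ℕ, 1 ≤ j → z ≠ j / a) :
    AnalyticAt ℂ (fun z => Complex.Gamma (1 - a * z)) z :=
  AnalyticAt.fun_comp (g := Complex.Gamma) (analyticAt_Gamma fun m hm =>
    hz (m + 1) m.succ_pos (by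
      rw [eq_div_iff ha, Nat.cast_succ]
      linear_combination -hm)) (by fun_prop)

lemma analyticAt_Gamma_one_sub {z : ℂ} (hz : ∀ j : ℕ, 1 ≤ j → z ≠ j) :
    AnalyticAt ℂ (fun z => Complex.Gamma (1 - z)) z := by
  simpa only [one_mul] using analyticAt_Gamma_one_sub_mul one_ne_zero (by simpa using hz)

lemma meromorphicAt_Gamma_mul_Gamma (a z : ℂ) :
    MeromorphicAt (fun z => Complex.Gamma (1 - z) * Complex.Gamma (1 - a * z)) z := by
  simpa only [one_mul] using
    (meromorphicAt_Gamma_one_sub_mul 1 z).fun_mul (meromorphicAt_Gamma_one_sub_mul a z)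

variable {k : ℕ}

lemma analyticAt_Gamma_mul_Gamma (hk : k ≠ 0) {z : ℂ} (hz : ∀ j : ℕ, 1 ≤ j → z ≠ j / k) :
    AnalyticAt ℂ (fun z => Complex.Gamma (1 - z) * Complex.Gamma (1 - k * z)) z := by
  have hk0 : (k : ℂ) ≠ 0 := Nat.cast_ne_zero.2 hk
  refine (analyticAt_Gamma_one_sub fun n hn h => ?_).fun_mul (analyticAt_Gamma_one_sub_mul hk0 hz)
  exact hz (n * k) (Nat.mul_pos hn hk.bot_lt)
    (by rw [h, Nat.cast_mul, mul_div_cancel_right₀ _ hk0])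

lemma neg_ite_le_meromorphicOrderAt_Gamma_mul_Gamma (hk : k ≠ 0) (j : ℕ) :
    -((if k ∣ j then 2 else 1 : ℕ) : WithTop ℤ) ≤ meromorphicOrderAt
      (fun z => Complex.Gamma (1 - z) * Complex.Gamma (1 - k * z)) (j / k) := by
  have hk0 : (k : ℂ) ≠ 0 := Nat.cast_ne_zero.2 hk
  have hΓ := neg_one_le_meromorphicOrderAt_Gamma_one_sub_mul one_ne_zero (j / k)
  have hΓk := neg_one_le_meromorphicOrderAt_Gamma_one_sub_mul hk0 (j / k)
  have hmer := meromorphicAt_Gamma_one_sub_mul 1 (j / k)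
  simp only [one_mul] at hΓ hmer
  rw [fun_meromorphicOrderAt_mul hmer (meromorphicAt_Gamma_one_sub_mul _ _)]
  split_ifs with hdvd
  · exact (add_le_add hΓ hΓk).trans' (by decide)
  · have hregular := analyticAt_Gamma_one_sub (z := j / k) fun n _ h => hdvd ⟨n, by
      rw [div_eq_iff hk0, mul_comm] at h
      exact_mod_cast h⟩
    exact (add_le_add hregular.meromorphicOrderAt_nonneg hΓk).trans' (by decide)

end Gamma

section LocallyIntegrable

lemma locallyIntegrable_mul_prod {X Y L : Type*} [TopologicalSpace X] [TopologicalSpace Y]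
    [MeasurableSpace X] [MeasurableSpace Y] [NormedRing L] {μ : Measure X} {ν : Measure Y}
    [SFinite μ] [SFinite ν] {f : X → L} {g : Y → L}
    (hf : LocallyIntegrable f μ) (hg : LocallyIntegrable g ν) :
    LocallyIntegrable (fun z : X × Y => f z.1 * g z.2) (μ.prod ν) := fun z => by
  obtain ⟨U, hU, hfU⟩ := hf z.1
  obtain ⟨V, hV, hgV⟩ := hg z.2
  refine ⟨U ×ˢ V, prod_mem_nhds hU hV, ?_⟩
  rw [IntegrableOn, ← Measure.prod_restrict]
  exact hfU.mul_prod hgV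

lemma locallyIntegrable_cpow {r : ℂ} (hr : -1 < r.re) :
    LocallyIntegrable fun x : ℝ => (x : ℂ) ^ r := fun x =>
  ⟨Ioc (x - 1) (x + 1), Ioc_mem_nhds (by linarith) (by linarith),
    (intervalIntegral.intervalIntegrable_cpow' hr).1⟩

end LocallyIntegrable

section TestFunction

variable {V W : Type*} [NormedAddCommGroup V] [NormedSpace ℝ V] [NormedAddCommGroup W]
  [NormedSpace ℝ W] [NormedSpace ℝ E]

/-- Smooth functions with compact support, the functions whose Mellin transforms are continued. -/
structure IsTestFunction (f : V → E) : Prop where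
  contDiff : ContDiff ℝ (⊤ : ℕ∞) f
  hasCompactSupport : HasCompactSupport f

/-- The mixed second derivative `∂₁∂₂b`, whose Mellin transform continues that of `b`. -/
noncomputable def mixedDeriv (b : ℝ × ℝ → E) (y : ℝ × ℝ) : E :=
  fderiv ℝ (fun z => fderiv ℝ b z (0, 1)) y (1, 0)

namespace IsTestFunction

lemma continuous {f : V → E} (hf : IsTestFunction f) : Continuous f :=
  hf.contDiff.continuous

lemma fderiv_apply {f : V → E} (hf : IsTestFunction f) (v : V) :
    IsTestFunction (fun x => fderiv ℝ f x v) :=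
  ⟨(hf.contDiff.fderiv_right (m := (⊤ : ℕ∞)) (by simp)).clm_apply contDiff_const,
    hf.hasCompactSupport.fderiv_apply ℝ v⟩

lemma comp_swap {f : V × W → E} (hf : IsTestFunction f) : IsTestFunction (f ∘ Prod.swap) :=
  ⟨hf.contDiff.comp (contDiff_snd.prodMk contDiff_fst),
    hf.hasCompactSupport.comp_homeomorph (Homeomorph.prodComm W V)⟩

lemma curry_left {f : V × W → E} (hf : IsTestFunction f) (x : V) :
    IsTestFunction fun y => f (x, y) :=
  ⟨hf.contDiff.comp (contDiff_const.prodMk contDiff_id),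
    hf.hasCompactSupport.comp_isClosedEmbedding
      ⟨isEmbedding_prodMkRight x, by
        rw [← image_univ, ← singleton_prod]
        exact isClosed_singleton.prod isClosed_univ⟩⟩

lemma mixedDeriv_iterate {b : ℝ × ℝ → E} (hb : IsTestFunction b) (n : ℕ) :
    IsTestFunction (mixedDeriv^[n] b) := by
  induction n with
  | zero => exact hb
  | succ n ih =>
    rw [Function.iterate_succ_apply']
    exact (ih.fderiv_apply _).fderiv_apply _

end IsTestFunction

end TestFunction

variable [NormedSpace ℂ E]

section Laplace

variable {V : Type*} [NormedAddCommGroup V] [NormedSpace ℂ V]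

lemma hasFDerivAt_cexp_smul_const (L : V →L[ℂ] ℂ) (x : E) (w : V) :
    HasFDerivAt (fun w => Complex.exp (L w) • x) (Complex.exp (L w) • L.smulRight x) w := by
  refine (L.hasFDerivAt.cexp.smul_const x).congr_fderiv ?_
  ext v
  simp [mul_smul]

lemma norm_cexp_smul_smulRight_le (L : V →L[ℂ] ℂ) (x : E) {z w : V} {ε : ℝ} (hε : 0 < ε)
    (hw : ‖w - z‖ ≤ ε / 2) :
    ‖Complex.exp (L w) • L.smulRight x‖ ≤
      2 / ε * ‖Real.exp (ε * ‖L‖) • Complex.exp (L z) • x‖ := by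
  have hL : ‖L‖ ≤ 2 / ε * Real.exp (ε / 2 * ‖L‖) := by
    rw [div_mul_eq_mul_div, le_div_iff₀ hε]
    linarith [Real.add_one_le_exp (ε / 2 * ‖L‖)]
  have hLw : (L w).re ≤ ε / 2 * ‖L‖ + (L z).re := by
    rw [← sub_le_iff_le_add, ← Complex.sub_re, ← map_sub, mul_comm]
    exact (Complex.re_le_norm _).trans (L.le_opNorm_of_le hw)
  calc ‖Complex.exp (L w) • L.smulRight x‖
      = Real.exp (L w).re * (‖L‖ * ‖x‖) := by
        rw [norm_smul, Complex.norm_exp, ContinuousLinearMap.norm_smulRight_apply]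
    _ ≤ Real.exp (ε / 2 * ‖L‖ + (L z).re) * (2 / ε * Real.exp (ε / 2 * ‖L‖) * ‖x‖) := by gcongr
    _ = 2 / ε * ‖Real.exp (ε * ‖L‖) • Complex.exp (L z) • x‖ := by
        rw [norm_smul, norm_smul, Complex.norm_exp, Real.norm_eq_abs, Real.abs_exp,
          ← add_halves ε, add_mul, Real.exp_add, Real.exp_add]
        ring_nf

lemma differentiableAt_integral_cexp_smul {Ω : Type*} [MeasurableSpace Ω] {μ : Measure Ω}
    {X : Ω → V →L[ℂ] ℂ} {g : Ω → E} {z : V} {ε : ℝ}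
    (hX : AEStronglyMeasurable X μ) (hg : AEStronglyMeasurable g μ) (hε : 0 < ε)
    (h : Integrable (fun ω => Real.exp (ε * ‖X ω‖) • Complex.exp (X ω z) • g ω) μ) :
    DifferentiableAt ℂ (fun w => ∫ ω, Complex.exp (X ω w) • g ω ∂μ) z := by
  have hexp : ∀ w, AEStronglyMeasurable (fun ω => Complex.exp (X ω w)) μ := fun w =>
    Complex.continuous_exp.comp_aestronglyMeasurable (hX.apply_continuousLinearMap w)
  have hmeas : ∀ w, AEStronglyMeasurable (fun ω => Complex.exp (X ω w) • g ω) μ := fun w =>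
    (hexp w).smul hg
  have hmeas' := (hexp z).smul
    ((ContinuousLinearMap.smulRightL ℂ V E).aestronglyMeasurable_comp₂ hX hg)
  have hint : Integrable (fun ω => Complex.exp (X ω z) • g ω) μ :=
    h.mono (hmeas z) (ae_of_all _ fun ω => by
      rw [norm_smul (Real.exp _), Real.norm_eq_abs, Real.abs_exp]
      exact le_mul_of_one_le_left (norm_nonneg _) (Real.one_le_exp (by positivity)))
  exact (hasFDerivAt_integral_of_dominated_of_fderiv_le
    (Metric.ball_mem_nhds z (half_pos hε)) (.of_forall hmeas) hint hmeas'
    (ae_of_all _ fun ω _ hw =>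
      norm_cexp_smul_smulRight_le (X ω) (g ω) hε (mem_ball_iff_norm.1 hw).le)
    (h.norm.const_mul _)
    (ae_of_all _ fun ω w _ => hasFDerivAt_cexp_smul_const (X ω) (g ω) w)).differentiableAt

end Laplace

section Mellin

lemma mellinConvergent_of_hasCompactSupport {f : ℝ → E} (hf : Continuous f)
    (hfs : HasCompactSupport f) {s : ℂ} (hs : 0 < s.re) : MellinConvergent f s :=
  ((locallyIntegrable_cpow (by simpa using hs)).integrable_smul_right_of_hasCompactSupport
    hf hfs).integrableOn

lemma smul_mellin_eq_neg_mellin_deriv [CompleteSpace E] {f : ℝ → E} (hf : ContDiff ℝ 1 f)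
    (hfs : HasCompactSupport f) {s : ℂ} (hs : 0 < s.re) :
    s • mellin f s = -mellin (deriv f) (s + 1) := by
  have hs0 : s ≠ 0 := by rintro rfl; simp at hs
  have hconv := (mellinConvergent_of_hasCompactSupport hf.continuous hfs hs).const_smul s
  have hconv' := mellinConvergent_of_hasCompactSupport hf.continuous_deriv_one hfs.deriv
    (s := s + 1) (by rw [Complex.add_re, Complex.one_re]; positivity)
  have hcont : Continuous fun x : ℝ => (x : ℂ) ^ s • f x :=
    (Complex.continuous_ofReal_cpow_const hs).smul hf.continuous
  have hderiv : ∀ x ∈ Ioi (0 : ℝ), HasDerivAt (fun x : ℝ => (x : ℂ) ^ s • f x)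
      ((x : ℂ) ^ (s + 1 - 1) • deriv f x + (x : ℂ) ^ (s - 1) • s • f x) x := fun x hx => by
    have := (hasDerivAt_ofReal_cpow_const (ne_of_gt hx) hs0).fun_smul
      (hf.differentiable one_ne_zero x).hasDerivAt
    rwa [add_sub_cancel_right, smul_smul, mul_comm _ s]
  have htop : Tendsto (fun x : ℝ => (x : ℂ) ^ s • f x) atTop (𝓝 0) :=
    (HasCompactSupport.is_zero_at_infty hfs.smul_left).mono_left atTop_le_cocompact
  have hFTC := integral_Ioi_of_hasDerivAt_of_tendsto hcont.continuousWithinAt hderiv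
    (hconv'.add hconv) htop
  rw [integral_add hconv' hconv, Complex.ofReal_zero, Complex.zero_cpow hs0, zero_smul,
    sub_zero] at hFTC
  rw [← mellin_const_smul]
  exact eq_neg_of_add_eq_zero_right hFTC

end Mellin

section QuadrantMellin

/-- The Mellin transform over the open quadrant, as a function of a pair of complex exponents. -/
noncomputable def quadrantMellin (b : ℝ × ℝ → E) (s : ℂ × ℂ) : E :=
  ∫ y in Ioi (0 : ℝ) ×ˢ Ioi (0 : ℝ), ((y.1 : ℂ) ^ (s.1 - 1) * (y.2 : ℂ) ^ (s.2 - 1)) • b y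

/-- The Mellin transform over the open quadrant divided by `Γ(s₁) Γ(s₂)`; this quotient extends to
an entire function. -/
noncomputable def normalizedMellin (b : ℝ × ℝ → E) (s : ℂ × ℂ) : E :=
  ((Complex.Gamma s.1)⁻¹ * (Complex.Gamma s.2)⁻¹) • quadrantMellin b s

variable {b : ℝ × ℝ → E} {s : ℂ × ℂ}

lemma integrableOn_cpow_mul_cpow_smul (hb : Continuous b) (hbs : HasCompactSupport b)
    (hs₁ : 0 < s.1.re) (hs₂ : 0 < s.2.re) :
    IntegrableOn (fun y : ℝ × ℝ => ((y.1 : ℂ) ^ (s.1 - 1) * (y.2 : ℂ) ^ (s.2 - 1)) • b y)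
      (Ioi 0 ×ˢ Ioi 0) :=
  ((locallyIntegrable_mul_prod (locallyIntegrable_cpow (by simpa using hs₁))
    (locallyIntegrable_cpow (by simpa using hs₂))).integrable_smul_right_of_hasCompactSupport
      hb hbs).integrableOn

lemma quadrantMellin_eq_mellin_mellin (hb : Continuous b) (hbs : HasCompactSupport b)
    (hs₁ : 0 < s.1.re) (hs₂ : 0 < s.2.re) :
    quadrantMellin b s = mellin (fun x => mellin (fun y => b (x, y)) s.2) s.1 := by
  simp only [quadrantMellin, mellin, ← integral_smul, smul_smul]
  exact setIntegral_prod _ (integrableOn_cpow_mul_cpow_smul hb hbs hs₁ hs₂)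

lemma quadrantMellin_comp_swap (b : ℝ × ℝ → E) (s : ℂ × ℂ) :
    quadrantMellin (b ∘ Prod.swap) s.swap = quadrantMellin b s := by
  unfold quadrantMellin
  rw [Measure.volume_eq_prod, ← setIntegral_prod_swap]
  simp [mul_comm]

variable [CompleteSpace E]

lemma IsTestFunction.smul_mellin_curry_left (hb : IsTestFunction b) (x : ℝ) {r : ℂ}
    (hr : 0 < r.re) :
    r • mellin (fun y => b (x, y)) r = -mellin (fun y => fderiv ℝ b (x, y) (0, 1)) (r + 1) := by
  have hderiv : deriv (fun y => b (x, y)) = fun y => fderiv ℝ b (x, y) (0, 1) := funext fun y =>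
    ((hb.contDiff.differentiable (by simp) (x, y)).hasFDerivAt.comp_hasDerivAt y
      ((hasDerivAt_const y x).prodMk (hasDerivAt_id y))).deriv
  obtain ⟨hsmooth, hsupp⟩ := hb.curry_left x
  rw [smul_mellin_eq_neg_mellin_deriv (hsmooth.of_le (by simp)) hsupp hr, hderiv]

lemma IsTestFunction.smul_quadrantMellin_snd (hb : IsTestFunction b) (hs₁ : 0 < s.1.re)
    (hs₂ : 0 < s.2.re) :
    s.2 • quadrantMellin b s =
      -quadrantMellin (fun y => fderiv ℝ b y (0, 1)) (s.1, s.2 + 1) := by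
  have hb' := hb.fderiv_apply (0, 1)
  have hs₂' : 0 < (s.2 + 1).re := by rw [Complex.add_re, Complex.one_re]; positivity
  rw [quadrantMellin_eq_mellin_mellin hb.continuous hb.hasCompactSupport hs₁ hs₂,
    quadrantMellin_eq_mellin_mellin hb'.continuous hb'.hasCompactSupport
      (s := (s.1, s.2 + 1)) hs₁ hs₂', ← mellin_const_smul]
  simp only [hb.smul_mellin_curry_left _ hs₂]
  simp only [mellin, smul_neg, integral_neg]

lemma IsTestFunction.smul_quadrantMellin_fst (hb : IsTestFunction b) (hs₁ : 0 < s.1.re)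
    (hs₂ : 0 < s.2.re) :
    s.1 • quadrantMellin b s =
      -quadrantMellin (fun y => fderiv ℝ b y (1, 0)) (s.1 + 1, s.2) := by
  have hswap : (fun y => fderiv ℝ (b ∘ Prod.swap) y (0, 1)) =
      (fun y => fderiv ℝ b y (1, 0)) ∘ Prod.swap := funext fun y =>
    congrArg (fun L : ℝ × ℝ →L[ℝ] E => L (0, 1))
      ((ContinuousLinearEquiv.prodComm ℝ ℝ ℝ).comp_right_fderiv (f := b) (x := y))
  rw [← quadrantMellin_comp_swap b, ← quadrantMellin_comp_swap _ (s.1 + 1, s.2), ← hswap]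
  exact hb.comp_swap.smul_quadrantMellin_snd (s := s.swap) hs₂ hs₁

lemma IsTestFunction.mul_smul_quadrantMellin (hb : IsTestFunction b) (hs₁ : 0 < s.1.re)
    (hs₂ : 0 < s.2.re) :
    (s.1 * s.2) • quadrantMellin b s = quadrantMellin (mixedDeriv b) (s + 1) := by
  have hs₂' : 0 < (s.2 + 1).re := by rw [Complex.add_re, Complex.one_re]; positivity
  rw [mul_smul, hb.smul_quadrantMellin_snd hs₁ hs₂, smul_neg, neg_eq_iff_eq_neg]
  exact (hb.fderiv_apply (0, 1)).smul_quadrantMellin_fst (s := (s.1, s.2 + 1)) hs₁ hs₂'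

lemma IsTestFunction.normalizedMellin_mixedDeriv (hb : IsTestFunction b) (hs₁ : 0 < s.1.re)
    (hs₂ : 0 < s.2.re) :
    normalizedMellin (mixedDeriv b) (s + 1) = normalizedMellin b s := by
  rw [normalizedMellin, normalizedMellin, ← hb.mul_smul_quadrantMellin hs₁ hs₂, smul_smul,
    Complex.one_div_Gamma_eq_self_mul_one_div_Gamma_add_one s.1,
    Complex.one_div_Gamma_eq_self_mul_one_div_Gamma_add_one s.2]
  congr 1
  simp only [Prod.fst_add, Prod.snd_add, Prod.fst_one, Prod.snd_one]
  ring

end QuadrantMellin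

section Differentiability

/-- The linear form `s ↦ s₁ log y₁ + s₂ log y₂`, which turns `y₁ ^ s₁ * y₂ ^ s₂` into an
exponential. -/
noncomputable def logForm (y : ℝ × ℝ) : ℂ × ℂ →L[ℂ] ℂ :=
  (Real.log y.1 : ℂ) • ContinuousLinearMap.fst ℂ ℂ ℂ +
    (Real.log y.2 : ℂ) • ContinuousLinearMap.snd ℂ ℂ ℂ

lemma cpow_mul_cpow_eq_cexp_logForm {y : ℝ × ℝ} (hy₁ : 0 < y.1) (hy₂ : 0 < y.2) (s : ℂ × ℂ) :
    (y.1 : ℂ) ^ s.1 * (y.2 : ℂ) ^ s.2 = Complex.exp (logForm y s) := by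
  rw [Complex.cpow_def_of_ne_zero (by exact_mod_cast hy₁.ne'),
    Complex.cpow_def_of_ne_zero (by exact_mod_cast hy₂.ne'), ← Complex.exp_add,
    ← Complex.ofReal_log hy₁.le, ← Complex.ofReal_log hy₂.le]
  rfl

lemma norm_cpow_mul_cpow {x y : ℝ} (hx : 0 < x) (hy : 0 < y) (z w : ℂ) :
    ‖(x : ℂ) ^ z * (y : ℂ) ^ w‖ = x ^ z.re * y ^ w.re := by
  rw [norm_mul, Complex.norm_cpow_eq_rpow_re_of_pos hx, Complex.norm_cpow_eq_rpow_re_of_pos hy]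

lemma measurable_logForm : Measurable logForm := by
  unfold logForm
  fun_prop

lemma norm_logForm_le (y : ℝ × ℝ) : ‖logForm y‖ ≤ |Real.log y.1| + |Real.log y.2| := by
  refine (norm_add_le _ _).trans (add_le_add ?_ ?_) <;>
  rw [norm_smul, Complex.norm_real, Real.norm_eq_abs]
  · exact mul_le_of_le_one_right (abs_nonneg _) (ContinuousLinearMap.norm_fst_le ..)
  · exact mul_le_of_le_one_right (abs_nonneg _) (ContinuousLinearMap.norm_snd_le ..)

lemma exp_mul_abs_log_le {x : ℝ} (hx : 0 < x) (ε : ℝ) :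
    Real.exp (ε * |Real.log x|) ≤ x ^ (-ε) * (1 + x ^ (2 * ε)) := by
  calc Real.exp (ε * |Real.log x|) ≤ Real.exp |Real.log x * ε| := by
        rw [abs_mul, mul_comm]
        gcongr
        exact le_abs_self ε
    _ ≤ Real.exp (Real.log x * ε) + Real.exp (-(Real.log x * ε)) := Real.exp_abs_le _
    _ = x ^ (-ε) * (1 + x ^ (2 * ε)) := by
        rw [mul_add, ← Real.rpow_add hx, Real.rpow_def_of_pos hx, Real.rpow_def_of_pos hx]
        ring_nf

lemma exp_mul_norm_logForm_le {y : ℝ × ℝ} (hy₁ : 0 < y.1) (hy₂ : 0 < y.2) {ε : ℝ} (hε : 0 ≤ ε) :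
    Real.exp (ε * ‖logForm y‖) ≤
      y.1 ^ (-ε) * y.2 ^ (-ε) * ((1 + y.1 ^ (2 * ε)) * (1 + y.2 ^ (2 * ε))) := by
  calc Real.exp (ε * ‖logForm y‖)
      ≤ Real.exp (ε * |Real.log y.1|) * Real.exp (ε * |Real.log y.2|) := by
        rw [← Real.exp_add, ← mul_add]
        gcongr
        exact norm_logForm_le y
    _ ≤ (y.1 ^ (-ε) * (1 + y.1 ^ (2 * ε))) * (y.2 ^ (-ε) * (1 + y.2 ^ (2 * ε))) := by
        gcongr
        exacts [exp_mul_abs_log_le hy₁ ε, exp_mul_abs_log_le hy₂ ε]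
    _ = _ := by ring

variable {b : ℝ × ℝ → E} {s : ℂ × ℂ}

lemma integrableOn_exp_norm_logForm_smul (hb : Continuous b) (hbs : HasCompactSupport b) {ε : ℝ}
    (hε : 0 ≤ ε) (hs₁ : ε < s.1.re) (hs₂ : ε < s.2.re) :
    IntegrableOn (fun y : ℝ × ℝ => Real.exp (ε * ‖logForm y‖) •
      Complex.exp (logForm y (s - 1)) • b y) (Ioi 0 ×ˢ Ioi 0) := by
  have hrpow : Continuous fun x : ℝ => x ^ (2 * ε) :=
    Real.continuous_rpow_const (by positivity)
  have hweight : Continuous fun y : ℝ × ℝ => (1 + y.1 ^ (2 * ε)) * (1 + y.2 ^ (2 * ε)) :=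
    (continuous_const.add (hrpow.comp continuous_fst)).mul
      (continuous_const.add (hrpow.comp continuous_snd))
  have hdom := integrableOn_cpow_mul_cpow_smul (hweight.smul hb) hbs.smul_left
    (s := (s.1 - ε, s.2 - ε)) (by simpa using hs₁) (by simpa using hs₂)
  refine Integrable.mono hdom ?_ ?_
  · have := measurable_logForm
    have := hb.aestronglyMeasurable (μ := volume.restrict (Ioi (0 : ℝ) ×ˢ Ioi (0 : ℝ)))
    fun_prop
  filter_upwards [ae_restrict_mem (measurableSet_Ioi.prod measurableSet_Ioi)] with y hy
  obtain ⟨hy₁, hy₂⟩ : 0 < y.1 ∧ 0 < y.2 := hy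
  have hsplit : ∀ {x : ℝ}, 0 < x → ∀ r : ℝ, x ^ (r - ε - 1) = x ^ (-ε) * x ^ (r - 1) :=
    fun hx r => by rw [← Real.rpow_add hx]; ring_nf
  calc ‖Real.exp (ε * ‖logForm y‖) • Complex.exp (logForm y (s - 1)) • b y‖
      = Real.exp (ε * ‖logForm y‖) * (y.1 ^ (s.1.re - 1) * y.2 ^ (s.2.re - 1) * ‖b y‖) := by
        rw [norm_smul, norm_smul, ← cpow_mul_cpow_eq_cexp_logForm hy₁ hy₂,
          norm_cpow_mul_cpow hy₁ hy₂, Real.norm_eq_abs, Real.abs_exp]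
        rfl
    _ ≤ y.1 ^ (-ε) * y.2 ^ (-ε) * ((1 + y.1 ^ (2 * ε)) * (1 + y.2 ^ (2 * ε))) *
          (y.1 ^ (s.1.re - 1) * y.2 ^ (s.2.re - 1) * ‖b y‖) := by
        gcongr
        exact exp_mul_norm_logForm_le hy₁ hy₂ hε
    _ = _ := by
        simp only [norm_smul, norm_cpow_mul_cpow hy₁ hy₂, Pi.smul_apply', Complex.sub_re,
          Complex.ofReal_re, Complex.one_re, hsplit hy₁, hsplit hy₂]
        rw [Real.norm_of_nonneg (by positivity)]
        ring

lemma differentiableAt_quadrantMellin (hb : Continuous b) (hbs : HasCompactSupport b)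
    (hs₁ : 0 < s.1.re) (hs₂ : 0 < s.2.re) : DifferentiableAt ℂ (quadrantMellin b) s := by
  obtain ⟨ε, hε, hlt⟩ := exists_between (lt_min hs₁ hs₂)
  obtain ⟨hε₁, hε₂⟩ := lt_min_iff.1 hlt
  have hkernel : quadrantMellin b = fun w => ∫ y in Ioi (0 : ℝ) ×ˢ Ioi (0 : ℝ),
      Complex.exp (logForm y (w - 1)) • b y := funext fun w =>
    setIntegral_congr_fun (measurableSet_Ioi.prod measurableSet_Ioi) fun y hy =>
      congrArg (· • b y) (cpow_mul_cpow_eq_cexp_logForm hy.1 hy.2 (w - 1))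
  have hlaplace := differentiableAt_integral_cexp_smul (z := s - 1)
    measurable_logForm.aestronglyMeasurable hb.aestronglyMeasurable hε
    (integrableOn_exp_norm_logForm_smul hb hbs hε.le hε₁ hε₂)
  rw [hkernel]
  exact DifferentiableAt.comp (f := fun w => w - 1) s hlaplace (by fun_prop)

lemma differentiableAt_normalizedMellin (hb : Continuous b) (hbs : HasCompactSupport b)
    (hs₁ : 0 < s.1.re) (hs₂ : 0 < s.2.re) : DifferentiableAt ℂ (normalizedMellin b) s := by
  have hΓ₁ := Complex.differentiable_one_div_Gamma.differentiableAt.comp s differentiableAt_fst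
  have hΓ₂ := Complex.differentiable_one_div_Gamma.differentiableAt.comp s differentiableAt_snd
  exact (hΓ₁.mul hΓ₂).smul (differentiableAt_quadrantMellin hb hbs hs₁ hs₂)

end Differentiability

section EntireExtension

variable [CompleteSpace E] {b : ℝ × ℝ → E}

lemma IsTestFunction.exists_differentiable_eq_normalizedMellin (hb : IsTestFunction b) :
    ∃ Φ : ℂ × ℂ → E, Differentiable ℂ Φ ∧
      ∀ s : ℂ × ℂ, 0 < s.1.re → 0 < s.2.re → Φ s = normalizedMellin b s := by
  let U : ℕ → Set (ℂ × ℂ) := fun n => {s | 0 < (s.1 + n).re ∧ 0 < (s.2 + n).re}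
  have hUo : ∀ n, IsOpen (U n) := fun n => by
    refine IsOpen.and (isOpen_lt ?_ ?_) (isOpen_lt ?_ ?_) <;> fun_prop
  have hU : Monotone U := monotone_nat_of_le_succ fun n s hs => by
    simp only [U, mem_ofPred_eq, Complex.add_re, Complex.natCast_re, Nat.cast_succ] at hs ⊢
    constructor <;> linarith
  have hcover : ⋃ n, U n = univ := iUnion_eq_univ_iff.2 fun s => by
    obtain ⟨n, hn⟩ := exists_nat_gt (max (-s.1.re) (-s.2.re))
    obtain ⟨h₁, h₂⟩ := max_lt_iff.1 hn
    exact ⟨n, by simpa using neg_lt_iff_pos_add'.1 h₁, by simpa using neg_lt_iff_pos_add'.1 h₂⟩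
  obtain ⟨Φ, hΦ, hΦU⟩ := exists_differentiable_eqOn_of_forall_eqOn_succ hUo hU hcover
    (f := fun n s => normalizedMellin (mixedDeriv^[n] b) (s + n))
    (fun n s hs => by
      have hbn := hb.mixedDeriv_iterate n
      exact ((differentiableAt_normalizedMellin hbn.continuous hbn.hasCompactSupport
        (s := s + n) hs.1 hs.2).comp s (differentiableAt_id.add_const _)).differentiableWithinAt)
    (fun n s hs => by
      simp only [Function.iterate_succ_apply', Nat.cast_succ, ← add_assoc]
      exact ((hb.mixedDeriv_iterate n).normalizedMellin_mixedDeriv hs.1 hs.2).symm)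
  exact ⟨Φ, hΦ, fun s hs₁ hs₂ => by simpa using hΦU 0 (show s ∈ U 0 by simp [U, hs₁, hs₂])⟩

end EntireExtension

section PowerIntegral

lemma mul_pow_cpow {x y : ℝ} (hx : 0 ≤ x) (hy : 0 ≤ y) (k : ℕ) (w : ℂ) :
    ((x * y ^ k : ℝ) : ℂ) ^ w = (x : ℂ) ^ w * (y : ℂ) ^ (k * w) := by
  rw [Complex.ofReal_mul, Complex.mul_cpow_ofReal_nonneg hx (pow_nonneg hy k), Complex.ofReal_pow,
    Complex.cpow_nat_mul' (by simpa [Complex.arg_ofReal_of_nonneg hy] using Real.pi_pos)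
      (by simpa [Complex.arg_ofReal_of_nonneg hy] using Real.pi_pos.le)]

lemma mul_pow_cpow_neg_smul_eqOn (b : ℝ × ℝ → E) (k : ℕ) (ξ : ℂ) :
    EqOn (fun y : ℝ × ℝ => ((y.1 : ℂ) ^ (1 - ξ - 1) * (y.2 : ℂ) ^ (1 - k * ξ - 1)) • b y)
      (fun y => ((y.1 * y.2 ^ k : ℝ) : ℂ) ^ (-ξ) • b y) (Ioi 0 ×ˢ Ioi 0) := fun y hy => by
  simp only [sub_sub_cancel_left, mul_pow_cpow (le_of_lt hy.1) (le_of_lt hy.2), mul_neg]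

variable {b : ℝ × ℝ → E} {k : ℕ} {ξ : ℂ}

lemma re_one_sub_pos (hk : 1 ≤ k) (hξ : ξ.re < 1 / k) : 0 < (1 - ξ).re := by
  simpa using hξ.trans_le (div_le_one_of_le₀ (Nat.one_le_cast.2 hk) k.cast_nonneg)

lemma re_one_sub_natCast_mul_pos (hk : 1 ≤ k) (hξ : ξ.re < 1 / k) : 0 < (1 - k * ξ).re := by
  simpa using (lt_div_iff₀' (Nat.cast_pos.2 hk)).1 hξ

lemma integrableOn_mul_pow_cpow_smul (hk : 1 ≤ k) (hb : Continuous b) (hbs : HasCompactSupport b)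
    (hξ : ξ.re < 1 / k) :
    IntegrableOn (fun y : ℝ × ℝ => ((y.1 * y.2 ^ k : ℝ) : ℂ) ^ (-ξ) • b y) (Ioi 0 ×ˢ Ioi 0) :=
  (integrableOn_cpow_mul_cpow_smul hb hbs (s := (1 - ξ, 1 - k * ξ)) (re_one_sub_pos hk hξ)
    (re_one_sub_natCast_mul_pos hk hξ)).congr_fun (mul_pow_cpow_neg_smul_eqOn b k ξ)
    (measurableSet_Ioi.prod measurableSet_Ioi)

lemma quadrantMellin_one_sub (b : ℝ × ℝ → E) (k : ℕ) (ξ : ℂ) :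
    quadrantMellin b (1 - ξ, 1 - k * ξ) =
      ∫ y in Ioi (0 : ℝ) ×ˢ Ioi (0 : ℝ), ((y.1 * y.2 ^ k : ℝ) : ℂ) ^ (-ξ) • b y :=
  setIntegral_congr_fun (measurableSet_Ioi.prod measurableSet_Ioi)
    (mul_pow_cpow_neg_smul_eqOn b k ξ)

theorem meromorphic_extension_of_power_integral_general [CompleteSpace E]
    (k : ℕ) (hk : 1 ≤ k) (b : ℝ × ℝ → E)
    (hb : ContDiff ℝ (⊤ : ℕ∞) b) (hbsupp : HasCompactSupport b) :
    (∀ ξ : ℂ, ξ.re < 1 / k →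
      IntegrableOn (fun y : ℝ × ℝ => ((y.1 * y.2 ^ k : ℝ) : ℂ) ^ (-ξ) • b y) (Ioi 0 ×ˢ Ioi 0)) ∧
    ∃ G : ℂ → E,
      (∀ ξ : ℂ, (∀ j : ℕ, 1 ≤ j → ξ ≠ j / k) → AnalyticAt ℂ G ξ) ∧
      (∀ ξ : ℂ, ξ.re < 1 / k →
        G ξ = ∫ y in Ioi (0 : ℝ) ×ˢ Ioi (0 : ℝ), ((y.1 * y.2 ^ k : ℝ) : ℂ) ^ (-ξ) • b y) ∧
      (∀ j : ℕ, 1 ≤ j → ∃ H : ℂ → E, AnalyticAt ℂ H (j / k) ∧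
        ∀ ξ : ℂ, ξ ≠ j / k → H ξ = (ξ - j / k) ^ (if k ∣ j then 2 else 1) • G ξ) := by
  have hk0 : k ≠ 0 := Nat.one_le_iff_ne_zero.1 hk
  obtain ⟨Φ, hΦ, hΦb⟩ :=
    IsTestFunction.exists_differentiable_eq_normalizedMellin ⟨hb, hbsupp⟩
  have hΦline : ∀ ξ, AnalyticAt ℂ (fun ξ => Φ (1 - ξ, 1 - k * ξ)) ξ := fun ξ =>
    (hΦ.comp (g := Φ) (f := fun ξ : ℂ => (1 - ξ, 1 - k * ξ)) (by fun_prop)).analyticAt ξ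
  refine ⟨fun ξ hξ => integrableOn_mul_pow_cpow_smul hk hb.continuous hbsupp hξ,
    fun ξ => (Complex.Gamma (1 - ξ) * Complex.Gamma (1 - k * ξ)) • Φ (1 - ξ, 1 - k * ξ),
    fun ξ hξ => (analyticAt_Gamma_mul_Gamma hk0 hξ).fun_smul (hΦline ξ), fun ξ hξ => ?_,
    fun j _ => ?_⟩
  · have h₁ := re_one_sub_pos hk hξ
    have h₂ := re_one_sub_natCast_mul_pos hk hξ
    simp only [← quadrantMellin_one_sub, hΦb (1 - ξ, 1 - k * ξ) h₁ h₂, normalizedMellin, ← mul_inv]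
    exact smul_inv_smul₀ (mul_ne_zero (Complex.Gamma_ne_zero_of_re_pos h₁)
      (Complex.Gamma_ne_zero_of_re_pos h₂)) _
  · obtain ⟨P, hP, hPΓ⟩ := exists_analyticAt_eq_pow_smul (meromorphicAt_Gamma_mul_Gamma k (j / k))
      (neg_ite_le_meromorphicOrderAt_Gamma_mul_Gamma hk0 j)
    exact ⟨_, hP.smul (hΦline _), fun ξ hξ => by rw [Pi.smul_apply', hPΓ ξ hξ, smul_assoc]⟩

end PowerIntegral

/-- The function `F(ξ) = ∫_0^∞∫_0^∞ (y₁ y₂^k)^{-ξ} b(y₁,y₂) dy₁ dy₂`, absolutely convergent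
for `Re ξ < 1/k`, extends meromorphically to `ℂ` with poles contained in `{j/k : j ∈ ℕ*}`,
of order at most 2 at positive integers and at most 1 elsewhere. -/
theorem meromorphic_extension_of_power_integral
    (k : ℕ) (hk : 1 ≤ k) (b : ℝ × ℝ → ℝ)
    (hb : ContDiff ℝ (⊤ : ℕ∞) b) (hbsupp : HasCompactSupport b) :
    (∀ ξ : ℂ, ξ.re < 1 / k →
      IntegrableOn (fun y : ℝ × ℝ =>
        ((y.1 * y.2 ^ k : ℝ) : ℂ) ^ (-ξ) * (b y : ℂ))
        (Set.Ioi 0 ×ˢ Set.Ioi 0)) ∧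
    ∃ G : ℂ → ℂ,
      (∀ ξ : ℂ, (∀ j : ℕ, 1 ≤ j → ξ ≠ (j : ℂ) / (k : ℂ)) → AnalyticAt ℂ G ξ) ∧
      (∀ ξ : ℂ, ξ.re < 1 / k →
        G ξ = ∫ y in Set.Ioi (0:ℝ) ×ˢ Set.Ioi (0:ℝ),
          ((y.1 * y.2 ^ k : ℝ) : ℂ) ^ (-ξ) * (b y : ℂ)) ∧
      (∀ j : ℕ, 1 ≤ j →
        ∃ H : ℂ → ℂ, AnalyticAt ℂ H ((j : ℂ) / (k : ℂ)) ∧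
          ∀ ξ : ℂ, ξ ≠ (j : ℂ) / (k : ℂ) →
            H ξ = (ξ - (j : ℂ) / (k : ℂ)) ^ (if k ∣ j then 2 else 1) * G ξ) := by
  simpa only [smul_eq_mul] using meromorphic_extension_of_power_integral_general k hk
    (fun y => (b y : ℂ)) (Complex.ofRealCLM.contDiff.comp hb)
    (hbsupp.comp_left Complex.ofReal_zero)
end

section
/- Let k ≥ 1 be an integer and ξ ∈ ℂ. Then for all y₁ > 0 and y₂ > 0, the Bernstein–Sato identity holds: ∂_{y₂} ∂_{y₁}^k ( (y₂ y₁^k)^{1−ξ} ) = b_k(ξ) · (y₂ y₁^k)^{-ξ}, where b_k(ξ) = (1−ξ) ∏_{j=1}^{k} (j − kξ). -/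
/-!
On the open positive quadrant the function separates:
`(y₂ y₁^k)^(1-ξ) = y₂^(1-ξ) · y₁^(k(1-ξ))`. So `∂_{y₂}` contributes the factor `1 - ξ`, while
`∂_{y₁}^k` contributes the `k`-th falling factorial of `k - kξ`, whose factors read from the last
to the first are `1 - kξ, 2 - kξ, …, k - kξ`.
-/

open Finset Polynomial

theorem descPochhammer_eval_natCast_sub {R : Type*} [CommRing R] (n : ℕ) (a : R) :
    (descPochhammer R n).eval (n - a) = ∏ j ∈ Icc 1 n, ((j : R) - a) := by
  induction n with
  | zero => simp
  | succ n ih =>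
    have shift : ((n + 1 : ℕ) : R) - a - 1 = n - a := by push_cast; ring
    simp only [descPochhammer_succ_left, eval_mul, eval_X, eval_comp, eval_sub, eval_one, shift,
      ih, prod_Icc_succ_top n.succ_pos, mul_comm]

theorem ofReal_mul_pow_cpow {s r : ℝ} (hs : 0 ≤ s) (hr : 0 ≤ r) (k : ℕ) (c : ℂ) :
    ((s * r ^ k : ℝ) : ℂ) ^ c = (s : ℂ) ^ c * (r : ℂ) ^ (k * c) := by
  have harg : k * (r : ℂ).arg = 0 := by rw [Complex.arg_ofReal_of_nonneg hr, mul_zero]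
  have hpow : (r : ℂ) ^ (k * c) = ((r : ℂ) ^ k) ^ c :=
    Complex.cpow_nat_mul' (by simp [harg, Real.pi_pos]) (by simp [harg, Real.pi_pos.le]) c
  rw [hpow, Complex.ofReal_mul, Complex.mul_cpow_ofReal_nonneg hs (pow_nonneg hr k),
    Complex.ofReal_pow]

theorem hasDerivAt_ofReal_cpow_of_ne_zero {x : ℝ} (hx : x ≠ 0) (c : ℂ) :
    HasDerivAt (fun r : ℝ => (r : ℂ) ^ c) (c * (x : ℂ) ^ (c - 1)) x := by
  rcases eq_or_ne c 0 with rfl | hc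
  · simpa using hasDerivAt_const x (1 : ℂ)
  · exact hasDerivAt_ofReal_cpow_const hx hc

theorem iteratedDeriv_ofReal_cpow (n : ℕ) (c : ℂ) {x : ℝ} (hx : x ≠ 0) :
    iteratedDeriv n (fun r : ℝ => (r : ℂ) ^ c) x
      = (descPochhammer ℂ n).eval c * (x : ℂ) ^ (c - n) := by
  induction n generalizing x with
  | zero => simp
  | succ n ih =>
    have ih_near : iteratedDeriv n (fun r : ℝ => (r : ℂ) ^ c) =ᶠ[nhds x]
        fun r : ℝ => (descPochhammer ℂ n).eval c * (r : ℂ) ^ (c - n) := by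
      filter_upwards [eventually_ne_nhds hx] with r hr using ih hr
    rw [iteratedDeriv_succ, ih_near.deriv_eq,
      ((hasDerivAt_ofReal_cpow_of_ne_zero hx (c - n)).const_mul _).deriv,
      descPochhammer_succ_eval, Nat.cast_succ, sub_sub, mul_assoc]

theorem iteratedDeriv_ofReal_mul_pow_cpow (n k : ℕ) (c : ℂ) {s r : ℝ} (hs : 0 ≤ s) (hr : 0 < r) :
    iteratedDeriv n (fun x : ℝ => ((s * x ^ k : ℝ) : ℂ) ^ c) r
      = (s : ℂ) ^ c * ((descPochhammer ℂ n).eval (k * c) * (r : ℂ) ^ (k * c - n)) := by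
  have separated : (fun x : ℝ => ((s * x ^ k : ℝ) : ℂ) ^ c) =ᶠ[nhds r]
      fun x : ℝ => (s : ℂ) ^ c * (x : ℂ) ^ (k * c) := by
    filter_upwards [lt_mem_nhds hr] with x hx using ofReal_mul_pow_cpow hs hx.le k c
  rw [separated.iteratedDeriv_eq, iteratedDeriv_const_mul_field,
    iteratedDeriv_ofReal_cpow n _ hr.ne']

theorem deriv_iteratedDeriv_ofReal_mul_pow_cpow (n k : ℕ) (c : ℂ) {s r : ℝ}
    (hs : 0 < s) (hr : 0 < r) :
    deriv (fun y : ℝ => iteratedDeriv n (fun x : ℝ => ((y * x ^ k : ℝ) : ℂ) ^ c) r) s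
      = c * (s : ℂ) ^ (c - 1) * ((descPochhammer ℂ n).eval (k * c) * (r : ℂ) ^ (k * c - n)) := by
  have separated : (fun y : ℝ => iteratedDeriv n (fun x : ℝ => ((y * x ^ k : ℝ) : ℂ) ^ c) r)
      =ᶠ[nhds s] fun y : ℝ =>
        (y : ℂ) ^ c * ((descPochhammer ℂ n).eval (k * c) * (r : ℂ) ^ (k * c - n)) := by
    filter_upwards [lt_mem_nhds hs] with y hy
      using iteratedDeriv_ofReal_mul_pow_cpow n k c hy.le hr
  rw [separated.deriv_eq, ((hasDerivAt_ofReal_cpow_of_ne_zero hs.ne' c).mul_const _).deriv]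

/-- Bernstein–Sato identity: for `y₁, y₂ > 0` and `ξ ∈ ℂ`,
`∂_{y₂} ∂_{y₁}^k ((y₂ y₁^k)^{1-ξ}) = b_k(ξ) (y₂ y₁^k)^{-ξ}`
with `b_k(ξ) = (1-ξ) ∏_{j=1}^k (j - kξ)`. -/
theorem bernstein_sato_identity (k : ℕ) (hk : 1 ≤ k) (ξ : ℂ) (y₁ y₂ : ℝ)
    (h1 : 0 < y₁) (h2 : 0 < y₂) :
    deriv (fun s : ℝ =>
        iteratedDeriv k (fun r : ℝ => ((s * r ^ k : ℝ) : ℂ) ^ (1 - ξ)) y₁) y₂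
      = ((1 - ξ) * ∏ j ∈ Finset.Icc 1 k, ((j : ℂ) - (k : ℂ) * ξ)) *
          ((y₂ * y₁ ^ k : ℝ) : ℂ) ^ (-ξ) := by
  have b_factor : (descPochhammer ℂ k).eval (k * (1 - ξ))
      = ∏ j ∈ Icc 1 k, ((j : ℂ) - (k : ℂ) * ξ) := by
    rw [← descPochhammer_eval_natCast_sub, mul_one_sub]
  have exponent_y₂ : 1 - ξ - 1 = -ξ := by ring
  have exponent_y₁ : k * (1 - ξ) - k = k * -ξ := by ring
  rw [deriv_iteratedDeriv_ofReal_mul_pow_cpow k k (1 - ξ) h2 h1, b_factor, exponent_y₂,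
    exponent_y₁, ofReal_mul_pow_cpow h2.le h1.le]
  ring
end

section
/- Define, for z > 0, I(z) = ∫_{ℝ²} e^{−(x²+y²)} / (1 + z² (x² − y²)²) dx dy. Then I(z) is asymptotically equivalent to π log z / z as z → ∞; that is, lim_{z→∞} z I(z) / log z = π. -/
open Filter

/-!
In polar coordinates `x² - y² = r² cos 2θ`. Averaging `(1 + z² r⁴ cos² 2θ)⁻¹` over the circle
gives `(1 + z² r⁴)^(-1/2)` exactly, so with `s = r²` a radial amplitude `g (x² + y²)` leaves
`π ∫₀^∞ g(s) (1 + (z s)²)^(-1/2) ds`. Since `z (1 + (z s)²)^(-1/2)` has primitive `arsinh (z s)`,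
its mass near `0` is `log z + O(1)`, while away from `0` it stays bounded by `1 / s`. Divided by
`log z` it is thus an approximate identity at `0⁺`, and only `g(0⁺)` survives.
-/

open Asymptotics MeasureTheory Real Set Topology

section

variable {E : Type*} [NormedAddCommGroup E] [NormedSpace ℝ E]

lemma integral_Ioo_eq_integral_comp_arctan (f : ℝ → E) :
    ∫ θ in Ioo (-(π / 2)) (π / 2), f θ = ∫ t : ℝ, (1 + t ^ 2)⁻¹ • f (arctan t) := by
  have h := integral_image_eq_integral_deriv_smul_of_monotoneOn MeasurableSet.univ
    (fun t _ ↦ (hasDerivAt_arctan' t).hasDerivWithinAt) (arctan_strictMono.monotone.monotoneOn _) f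
  rwa [image_univ, range_arctan, setIntegral_univ] at h

lemma integral_inv_add_sq {c : ℝ} (hc : 0 < c) : ∫ t : ℝ, (c + t ^ 2)⁻¹ = π / √c := by
  have hsqrt : 0 < √c := sqrt_pos.2 hc
  have hscale (t : ℝ) : (c + t ^ 2)⁻¹ = c⁻¹ * (1 + (t / √c) ^ 2)⁻¹ := by
    rw [div_pow, sq_sqrt hc.le, ← mul_inv]
    field_simp
  simp only [hscale]
  rw [integral_const_mul, Measure.integral_comp_div (fun t ↦ (1 + t ^ 2)⁻¹),
    integral_univ_inv_one_add_sq, abs_of_pos hsqrt, smul_eq_mul]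
  nth_rw 1 [← sq_sqrt hc.le]
  field_simp

lemma integral_inv_one_add_mul_cos_sq {b : ℝ} (hb : -1 < b) :
    ∫ θ in -(π / 2)..π / 2, (1 + b * cos θ ^ 2)⁻¹ = π / √(1 + b) := by
  have hpi := pi_pos
  rw [intervalIntegral.integral_of_le (by linarith), integral_Ioc_eq_integral_Ioo,
    integral_Ioo_eq_integral_comp_arctan, ← integral_inv_add_sq (by linarith)]
  refine integral_congr_ae (ae_of_all _ fun t ↦ ?_)
  simp only [cos_sq_arctan, smul_eq_mul, one_div]
  rw [← mul_inv]
  congr 1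
  field_simp
  ring

lemma integral_Ioo_inv_one_add_mul_cos_two_mul_sq {b : ℝ} (hb : -1 < b) :
    ∫ θ in Ioo (-π) π, (1 + b * cos (2 * θ) ^ 2)⁻¹ = 2 * π / √(1 + b) := by
  have hpos (θ : ℝ) : 0 < 1 + b * cos θ ^ 2 := by
    rcases le_total 0 b with hb0 | hb0
    · positivity
    · nlinarith [cos_sq_le_one θ]
  have hcont : Continuous fun θ ↦ (1 + b * cos θ ^ 2)⁻¹ :=
    Continuous.inv₀ (by fun_prop) fun θ ↦ (hpos θ).ne'
  have hperiodic : Function.Periodic (fun θ ↦ (1 + b * cos θ ^ 2)⁻¹) π := fun θ ↦ by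
    simp only [cos_add_pi, neg_sq]
  have hfour : ∫ θ in 2 * -π..2 * π, (1 + b * cos θ ^ 2)⁻¹ = 4 * (π / √(1 + b)) := by
    have h := hperiodic.intervalIntegral_add_zsmul_eq 4 (2 * -π) hcont.intervalIntegrable
    have hend : 2 * -π + (4 : ℤ) • π = 2 * π := by rw [zsmul_eq_mul, Int.cast_ofNat]; ring
    have hmid : -(π / 2) + π = π / 2 := by ring
    rwa [hend, hperiodic.intervalIntegral_add_eq (2 * -π) (-(π / 2)), hmid,
      integral_inv_one_add_mul_cos_sq hb, zsmul_eq_mul, Int.cast_ofNat] at h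
  rw [← integral_Ioc_eq_integral_Ioo, ← intervalIntegral.integral_of_le (by linarith [pi_pos]),
    intervalIntegral.integral_comp_mul_left (fun φ ↦ (1 + b * cos φ ^ 2)⁻¹) two_ne_zero, hfour,
    smul_eq_mul]
  ring

/-- The radial kernel left after angular averaging, normalised by `log z` so that its mass near `0`
tends to `1` as `z → ∞`. Meaningful for `z > 1`: at `z = 1` the division by `log 1 = 0` makes it
vanish. -/
noncomputable def logPeakKernel (z s : ℝ) : ℝ := z / log z * (√(1 + (z * s) ^ 2))⁻¹

lemma tendsto_arsinh_sub_log : Tendsto (fun x ↦ arsinh x - log x) atTop (𝓝 (log 2)) := by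
  have hlim : Tendsto (fun x : ℝ ↦ 1 + √(1 + (x⁻¹) ^ 2)) atTop (𝓝 2) := by
    have h := ((tendsto_inv_atTop_zero (𝕜 := ℝ)).pow 2).const_add 1 |>.sqrt.const_add 1
    rwa [zero_pow two_ne_zero, add_zero, sqrt_one, one_add_one_eq_two] at h
  refine (hlim.log two_ne_zero).congr' ?_
  filter_upwards [eventually_gt_atTop 0] with x hx
  have hfactor : x + √(1 + x ^ 2) = x * (1 + √(1 + (x⁻¹) ^ 2)) := by
    have hsq : 1 + x ^ 2 = x ^ 2 * (1 + (x⁻¹) ^ 2) := by field_simp; ring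
    rw [hsq, sqrt_mul (sq_nonneg x), sqrt_sq hx.le]
    ring
  rw [arsinh, hfactor, log_mul hx.ne' (by positivity), add_sub_cancel_left]

lemma isEquivalent_arsinh_log : arsinh ~[atTop] log :=
  (tendsto_arsinh_sub_log.isBigO_one ℝ).trans_isLittleO isLittleO_const_log_atTop

lemma logPeakKernel_nonneg {z : ℝ} (hz : 1 ≤ z) (s : ℝ) : 0 ≤ logPeakKernel z s := by
  have := log_nonneg hz
  unfold logPeakKernel
  positivity

lemma continuous_logPeakKernel (z : ℝ) : Continuous (logPeakKernel z) :=
  continuous_const.mul (Continuous.inv₀ (by fun_prop) fun s ↦ by positivity)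

lemma integral_logPeakKernel (z a b : ℝ) :
    ∫ s in a..b, logPeakKernel z s = (arsinh (z * b) - arsinh (z * a)) / log z := by
  have hderiv (s : ℝ) : HasDerivAt (fun s ↦ arsinh (z * s) / log z) (logPeakKernel z s) s := by
    refine (((hasDerivAt_id s).const_mul z).arsinh.div_const (log z)).congr_deriv ?_
    rw [logPeakKernel, id, mul_one, smul_eq_mul, mul_div_assoc, mul_comm]
  rw [intervalIntegral.integral_eq_sub_of_hasDerivAt (fun s _ ↦ hderiv s)
    ((continuous_logPeakKernel z).intervalIntegrable a b), sub_div]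

lemma tendsto_integral_Ioc_logPeakKernel :
    Tendsto (fun z ↦ ∫ s in Ioc 0 1, logPeakKernel z s) atTop (𝓝 1) := by
  have hlog : ∀ᶠ z in atTop, log z ≠ 0 :=
    (eventually_gt_atTop 1).mono fun z hz ↦ (log_pos hz).ne'
  refine ((isEquivalent_iff_tendsto_one hlog).1 isEquivalent_arsinh_log).congr fun z ↦ ?_
  rw [← intervalIntegral.integral_of_le zero_le_one, integral_logPeakKernel, mul_one, mul_zero,
    arsinh_zero, sub_zero, Pi.div_apply]

lemma logPeakKernel_le_inv_div_log {z s : ℝ} (hz : 1 ≤ z) (hs : 0 < s) :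
    logPeakKernel z s ≤ s⁻¹ / log z := by
  have hlog := log_nonneg hz
  have hz0 : 0 < z := one_pos.trans_le hz
  have hsqrt : z * s ≤ √(1 + (z * s) ^ 2) := le_sqrt_of_sq_le (by linarith)
  calc logPeakKernel z s ≤ z / log z * (z * s)⁻¹ := by unfold logPeakKernel; gcongr
    _ = s⁻¹ / log z := by rw [mul_inv, div_mul_eq_mul_div, mul_inv_cancel_left₀ hz0.ne']

lemma tendstoUniformlyOn_logPeakKernel {δ : ℝ} (hδ : 0 < δ) :
    TendstoUniformlyOn logPeakKernel 0 atTop (Ici δ) := by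
  rw [Metric.tendstoUniformlyOn_iff]
  intro ε hε
  have hbound : Tendsto (fun z ↦ δ⁻¹ / log z) atTop (𝓝 0) :=
    tendsto_log_atTop.const_div_atTop _
  filter_upwards [eventually_ge_atTop 1, hbound.eventually_lt_const hε] with z hz hzε s (hs : δ ≤ s)
  have hlog := log_nonneg hz
  rw [Pi.zero_apply, dist_zero_left, norm_of_nonneg (logPeakKernel_nonneg hz s)]
  calc logPeakKernel z s ≤ s⁻¹ / log z := logPeakKernel_le_inv_div_log hz (hδ.trans_le hs)
    _ ≤ δ⁻¹ / log z := by gcongr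
    _ < ε := hzε

lemma tendsto_integral_logPeakKernel_smul [CompleteSpace E] {g : ℝ → E} {a : E}
    (hg : IntegrableOn g (Ioi 0)) (hga : Tendsto g (𝓝[>] 0) (𝓝 a)) :
    Tendsto (fun z ↦ ∫ s in Ioi 0, logPeakKernel z s • g s) atTop (𝓝 a) := by
  refine tendsto_setIntegral_peak_smul_of_integrableOn_of_tendsto measurableSet_Ioi
    measurableSet_Ioc Ioc_subset_Ioi_self (Ioc_mem_nhdsGT one_pos) measure_Ioc_lt_top.ne
    ?_ ?_ tendsto_integral_Ioc_logPeakKernel ?_ hg hga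
  · filter_upwards [eventually_ge_atTop 1] with z hz s _ using logPeakKernel_nonneg hz s
  · intro u hu h0
    obtain ⟨δ, hδ, hball⟩ := Metric.isOpen_iff.1 hu 0 h0
    refine (tendstoUniformlyOn_logPeakKernel hδ).mono fun s ⟨(hs : 0 < s), hsu⟩ ↦ ?_
    by_contra hlt
    exact hsu (hball (by simpa [abs_of_pos hs] using hlt))
  · exact Eventually.of_forall fun z ↦ (continuous_logPeakKernel z).aestronglyMeasurable

lemma integral_Ioi_smul_comp_sq (f : ℝ → E) :
    ∫ r in Ioi (0 : ℝ), r • f (r ^ 2) = (2 : ℝ)⁻¹ • ∫ s in Ioi (0 : ℝ), f s := by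
  rw [← integral_comp_rpow_Ioi_of_pos (g := f) two_pos, ← integral_smul]
  norm_num [smul_smul, ← mul_assoc]

lemma integrableOn_Ioi_smul_comp_sq_iff (f : ℝ → E) :
    IntegrableOn (fun r ↦ r • f (r ^ 2)) (Ioi 0) ↔ IntegrableOn f (Ioi 0) := by
  rw [← integrableOn_Ioi_comp_rpow_iff' f two_ne_zero]
  norm_num

lemma integrableOn_smul_inv_one_add_mul_cos_sq_smul (z : ℝ) {g : ℝ → E}
    (hg : IntegrableOn g (Ioi 0)) :
    IntegrableOn
      (fun p : ℝ × ℝ ↦ p.1 • (1 + (z * p.1 ^ 2) ^ 2 * cos (2 * p.2) ^ 2)⁻¹ • g (p.1 ^ 2))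
      (Ioi 0 ×ˢ Ioo (-π) π) := by
  have hradial : Integrable (fun p : ℝ × ℝ ↦ p.1 • g (p.1 ^ 2))
      ((volume.restrict (Ioi 0)).prod (volume.restrict (Ioo (-π) π))) :=
    Integrable.comp_fst ((integrableOn_Ioi_smul_comp_sq_iff g).2 hg) _
  have hbound (p : ℝ × ℝ) : ‖(1 + (z * p.1 ^ 2) ^ 2 * cos (2 * p.2) ^ 2)⁻¹‖ ≤ 1 := by
    rw [norm_of_nonneg (by positivity)]
    exact inv_le_one_of_one_le₀ (le_add_of_nonneg_right (by positivity))
  have hcont : Continuous fun p : ℝ × ℝ ↦ (1 + (z * p.1 ^ 2) ^ 2 * cos (2 * p.2) ^ 2)⁻¹ :=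
    Continuous.inv₀ (by fun_prop) fun p ↦ by positivity
  rw [IntegrableOn, Measure.volume_eq_prod, ← Measure.prod_restrict]
  exact (hradial.bdd_smul 1 hcont.aestronglyMeasurable (ae_of_all _ hbound)).congr
    (ae_of_all _ fun p ↦ smul_comm _ _ _)

lemma integral_inv_one_add_sq_sub_sq_smul_radial [CompleteSpace E] (z : ℝ) {g : ℝ → E}
    (hg : IntegrableOn g (Ioi 0)) :
    ∫ p : ℝ × ℝ, (1 + z ^ 2 * (p.1 ^ 2 - p.2 ^ 2) ^ 2)⁻¹ • g (p.1 ^ 2 + p.2 ^ 2) =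
      π • ∫ s in Ioi (0 : ℝ), (√(1 + (z * s) ^ 2))⁻¹ • g s := by
  have hsq_add (r θ : ℝ) : (r * cos θ) ^ 2 + (r * sin θ) ^ 2 = r ^ 2 := by
    linear_combination r ^ 2 * sin_sq_add_cos_sq θ
  have hsq_sub (r θ : ℝ) : z ^ 2 * ((r * cos θ) ^ 2 - (r * sin θ) ^ 2) ^ 2 =
      (z * r ^ 2) ^ 2 * cos (2 * θ) ^ 2 := by
    rw [cos_two_mul']; ring
  have hsq (r : ℝ) : -1 < (z * r ^ 2) ^ 2 := neg_one_lt_zero.trans_le (sq_nonneg _)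
  calc
    _ = ∫ p in Ioi (0 : ℝ) ×ˢ Ioo (-π) π,
        p.1 • (1 + (z * p.1 ^ 2) ^ 2 * cos (2 * p.2) ^ 2)⁻¹ • g (p.1 ^ 2) := by
      rw [← integral_comp_polarCoord_symm]
      simp only [polarCoord_symm_apply, polarCoord_target, hsq_add, hsq_sub]
    _ = ∫ r in Ioi (0 : ℝ), r • (2 * π / √(1 + (z * r ^ 2) ^ 2)) • g (r ^ 2) := by
      rw [Measure.volume_eq_prod, setIntegral_prod _
        (integrableOn_smul_inv_one_add_mul_cos_sq_smul z hg)]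
      simp only [integral_smul, integral_smul_const,
        integral_Ioo_inv_one_add_mul_cos_two_mul_sq (hsq _)]
    _ = (2 : ℝ)⁻¹ • ∫ s in Ioi (0 : ℝ), (2 * π / √(1 + (z * s) ^ 2)) • g s :=
      integral_Ioi_smul_comp_sq fun s ↦ (2 * π / √(1 + (z * s) ^ 2)) • g s
    _ = π • ∫ s in Ioi (0 : ℝ), (√(1 + (z * s) ^ 2))⁻¹ • g s := by
      simp only [div_eq_mul_inv, mul_smul, integral_smul]
      rw [inv_smul_smul₀ two_ne_zero]

theorem conical_singularity_log_asymptotics_general [CompleteSpace E] {g : ℝ → E} {a : E}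
    (hg : IntegrableOn g (Ioi 0)) (hga : Tendsto g (𝓝[>] 0) (𝓝 a)) :
    Tendsto (fun z : ℝ ↦ (z / log z) •
        ∫ p : ℝ × ℝ, (1 + z ^ 2 * (p.1 ^ 2 - p.2 ^ 2) ^ 2)⁻¹ • g (p.1 ^ 2 + p.2 ^ 2))
      atTop (𝓝 (π • a)) := by
  refine ((tendsto_integral_logPeakKernel_smul hg hga).const_smul π).congr fun z ↦ ?_
  simp only [integral_inv_one_add_sq_sub_sq_smul_radial z hg, logPeakKernel, mul_smul,
    integral_smul]
  exact smul_comm _ _ _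

end

/-- The conical-singularity example: `I(z) = ∫_{ℝ²} e^{-(x²+y²)}/(1+z²(x²-y²)²) dx dy`
is asymptotically equivalent to `π log z / z` as `z → ∞`. -/
theorem conical_singularity_log_asymptotics :
    Tendsto (fun z : ℝ =>
        z * (∫ p : ℝ × ℝ,
          Real.exp (-(p.1 ^ 2 + p.2 ^ 2)) / (1 + z ^ 2 * (p.1 ^ 2 - p.2 ^ 2) ^ 2))
          / Real.log z)
      atTop (nhds Real.pi) := by
  have hexp : Tendsto (fun s : ℝ ↦ exp (-s)) (𝓝[>] 0) (𝓝 1) := by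
    have hcont : Continuous fun s : ℝ ↦ exp (-s) := by fun_prop
    simpa using (hcont.tendsto 0).mono_left nhdsWithin_le_nhds
  have h := conical_singularity_log_asymptotics_general (integrableOn_exp_neg_Ioi 0) hexp
  simpa only [smul_eq_mul, mul_one, div_mul_eq_mul_div, inv_mul_eq_div] using h
end

section
/- Define, for z > 0, Ĩ(z) = ∫_{ℝ²} e^{−(x²+y²)} / (1 + z² (x⁴ − y⁴)²) dx dy. Then lim_{z→∞} √z · Ĩ(z) = π ∫_0^∞ du / √(1 + u⁴). -/
open Filter

/-!
The phase `f = x⁴ - y⁴` is homogeneous of degree `4` on the plane, so substituting `z ^ (-1/4) • p`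
for `p` turns `√z` times the integral into that of `exp (-(x² + y²) / √z) / (1 + f²)`. Although
`1 / (1 + f²)` equals `1` along the whole cone `f = 0`, it is integrable, so by dominated
convergence the Gaussian may be replaced by its value at the origin. In polar coordinates
`f = r⁴ cos 2θ`, the angular integral of `1 / (1 + r⁸ cos² 2θ)` is `2π / √(1 + r⁸)`, and `u = r²`
produces the constant. A phase of degree `d` leads to `1 / √(1 + u ^ d)`, whose integrability is
exactly `2 < d`: at `d = 2` a logarithm appears.
-/

open MeasureTheory Module Real Set
open scoped Topology

section Localization

variable {E F V : Type*} [NormedAddCommGroup E] [NormedSpace ℝ E] [MeasurableSpace E] [BorelSpace E]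
  {μ : Measure E} [NormedAddCommGroup F] [NormedSpace ℝ F]

theorem tendsto_integral_comp_smul_smul_of_bounded {φ : E → ℝ} {g : E → F} {C : ℝ}
    (hφm : Measurable φ) (hφC : ∀ x, ‖φ x‖ ≤ C) (hφ0 : ContinuousAt φ 0) (hg : Integrable g μ) :
    Tendsto (fun ε : ℝ => ∫ x, φ (ε • x) • g x ∂μ) (𝓝 0) (𝓝 (φ 0 • ∫ x, g x ∂μ)) := by
  rw [← integral_smul]
  refine tendsto_integral_filter_of_dominated_convergence (fun x => C * ‖g x‖)
    (.of_forall fun ε => ?_) (.of_forall fun ε => ae_of_all _ fun x => ?_)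
    (hg.norm.const_mul C) (ae_of_all _ fun x => ?_)
  · exact (hφm.comp (measurable_const_smul ε)).aestronglyMeasurable.smul hg.aestronglyMeasurable
  · rw [norm_smul]
    gcongr
    exact hφC _
  · have hε : Tendsto (fun ε : ℝ => ε • x) (𝓝 0) (𝓝 0) :=
      Continuous.tendsto' (by fun_prop) _ _ (zero_smul ℝ x)
    exact (hφ0.tendsto.comp hε).smul_const (g x)

variable [FiniteDimensional ℝ E] [μ.IsAddHaarMeasure] [AddCommGroup V] [Module ℝ V]

theorem rpow_smul_integral_smul_comp_smul_of_homogeneous {d z : ℝ} (hd : d ≠ 0) (hz : 0 < z)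
    {f : E → V} (hf : ∀ t : ℝ, 0 < t → ∀ x, f (t • x) = t ^ d • f x) (h : V → F) (φ : E → ℝ) :
    z ^ (finrank ℝ E / d) • ∫ x, φ x • h (z • f x) ∂μ
      = ∫ x, φ (z ^ (-d⁻¹) • x) • h (f x) ∂μ := by
  have hpow : z ^ (finrank ℝ E / d) = (z ^ d⁻¹) ^ finrank ℝ E := by
    rw [← rpow_mul_natCast hz.le, inv_mul_eq_div]
  have hrescale (x : E) : z • f (z ^ (-d⁻¹) • x) = f x := by
    rw [hf _ (by positivity), ← rpow_mul hz.le, neg_mul, inv_mul_cancel₀ hd, rpow_neg_one,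
      smul_inv_smul₀ hz.ne']
  rw [hpow, ← Measure.integral_comp_inv_smul_of_nonneg μ _ (by positivity), ← rpow_neg hz.le]
  simp only [hrescale]

theorem tendsto_rpow_smul_integral_smul_comp_smul_of_homogeneous {d C : ℝ} (hd : 0 < d)
    {f : E → V} (hf : ∀ t : ℝ, 0 < t → ∀ x, f (t • x) = t ^ d • f x) {h : V → F}
    (hint : Integrable (fun x => h (f x)) μ) {φ : E → ℝ} (hφm : Measurable φ)
    (hφC : ∀ x, ‖φ x‖ ≤ C) (hφ0 : ContinuousAt φ 0) :
    Tendsto (fun z : ℝ => z ^ (finrank ℝ E / d) • ∫ x, φ x • h (z • f x) ∂μ) atTop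
      (𝓝 (φ 0 • ∫ x, h (f x) ∂μ)) := by
  refine ((tendsto_integral_comp_smul_smul_of_bounded hφm hφC hφ0 hint).comp
    (tendsto_rpow_neg_atTop (inv_pos.mpr hd))).congr' ?_
  filter_upwards [eventually_gt_atTop 0] with z hz
  exact (rpow_smul_integral_smul_comp_smul_of_homogeneous hd.ne' hz hf h φ).symm

end Localization

section Angular

theorem hasDerivAt_arctan_div {N D : ℝ → ℝ} {N' D' x : ℝ} (hN : HasDerivAt N N' x)
    (hD : HasDerivAt D D' x) (hx : D x ≠ 0) :
    HasDerivAt (fun y => arctan (N y / D y)) ((N' * D x - N x * D') / (N x ^ 2 + D x ^ 2)) x := by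
  refine (hN.div hD hx).arctan.congr_deriv ?_
  have : N x ^ 2 + D x ^ 2 ≠ 0 := by positivity
  simp only [Pi.div_apply]
  field_simp
  ring

theorem mul_cos_sq_add_mul_sin_sq_pos {a b : ℝ} (ha : 0 < a) (hb : 0 < b) (θ : ℝ) :
    0 < a * cos θ ^ 2 + b * sin θ ^ 2 := by
  rcases eq_or_ne (cos θ) 0 with hcos | hcos
  · have hsin : sin θ ^ 2 = 1 := by simpa [hcos] using sin_sq_add_cos_sq θ
    simpa [hcos, hsin] using hb
  · positivity

-- Away from the poles of `tan`, the arctangent below differs from `arctan (b / a * tan θ) - θ` by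
-- a multiple of `π`; in this form the primitive is smooth on the whole line.
theorem hasDerivAt_primitive_one_div_sq_mul_cos_sq_add_sq_mul_sin_sq {a b : ℝ} (ha : 0 < a)
    (hb : 0 < b) (θ : ℝ) :
    HasDerivAt (fun θ => (θ + arctan ((b - a) * (sin θ * cos θ) /
        (a * cos θ ^ 2 + b * sin θ ^ 2))) / (a * b))
      (1 / (a ^ 2 * cos θ ^ 2 + b ^ 2 * sin θ ^ 2)) θ := by
  have hsin := hasDerivAt_sin θ
  have hcos := hasDerivAt_cos θ
  have harctan := hasDerivAt_arctan_div ((hsin.mul hcos).const_mul (b - a))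
    (((hcos.pow 2).const_mul a).add ((hsin.pow 2).const_mul b))
    (mul_cos_sq_add_mul_sin_sq_pos ha hb θ).ne'
  refine (((hasDerivAt_id θ).add harctan).div_const (a * b)).congr_deriv ?_
  have hpyth := sin_sq_add_cos_sq θ
  have hquad := (mul_cos_sq_add_mul_sin_sq_pos (pow_pos ha 2) (pow_pos hb 2) θ).ne'
  have hnorm : ((b - a) * (sin θ * cos θ)) ^ 2 + (a * cos θ ^ 2 + b * sin θ ^ 2) ^ 2
      = a ^ 2 * cos θ ^ 2 + b ^ 2 * sin θ ^ 2 := by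
    linear_combination (a ^ 2 * cos θ ^ 2 + b ^ 2 * sin θ ^ 2) * hpyth
  simp only [Pi.mul_apply, Pi.add_apply, Pi.pow_apply]
  rw [hnorm]
  field_simp
  linear_combination (a * b + (b - a) * (a * cos θ ^ 2 - b * sin θ ^ 2)) * hpyth

theorem integral_one_div_sq_mul_cos_sq_add_sq_mul_sin_sq {a b : ℝ} (ha : 0 < a) (hb : 0 < b)
    (m n : ℤ) :
    ∫ θ in (m * π)..(n * π), 1 / (a ^ 2 * cos θ ^ 2 + b ^ 2 * sin θ ^ 2)
      = (n - m) * π / (a * b) := by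
  rw [intervalIntegral.integral_eq_sub_of_hasDerivAt fun θ _ =>
    hasDerivAt_primitive_one_div_sq_mul_cos_sq_add_sq_mul_sin_sq ha hb θ]
  · simp only [sin_int_mul_pi, zero_mul, mul_zero, zero_div, arctan_zero, add_zero]
    ring
  · refine Continuous.intervalIntegrable (continuous_const.div (by fun_prop) fun θ => ?_) _ _
    exact (mul_cos_sq_add_mul_sin_sq_pos (pow_pos ha 2) (pow_pos hb 2) θ).ne'

theorem integral_one_div_one_add_mul_cos_mul_sq {a : ℝ} (ha : -1 < a) {k : ℕ} (hk : k ≠ 0) :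
    ∫ θ in Ioo (-π) π, 1 / (1 + a * cos (k * θ) ^ 2) = 2 * π / √(1 + a) := by
  have ha' : 0 < 1 + a := by linarith
  have hk' : (k : ℝ) ≠ 0 := Nat.cast_ne_zero.mpr hk
  have hquad (θ : ℝ) :
      1 + a * cos θ ^ 2 = √(1 + a) ^ 2 * cos θ ^ 2 + 1 ^ 2 * sin θ ^ 2 := by
    rw [sq_sqrt ha'.le]
    linear_combination -sin_sq_add_cos_sq θ
  have hperiods : ∫ θ in (-k * π)..(k * π), 1 / (1 + a * cos θ ^ 2)
      = (k - -k) * π / (√(1 + a) * 1) := by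
    simp only [hquad]
    exact_mod_cast
      integral_one_div_sq_mul_cos_sq_add_sq_mul_sin_sq (sqrt_pos.mpr ha') one_pos (-k) k
  rw [← integral_Ioc_eq_integral_Ioo, ← intervalIntegral.integral_of_le (neg_le_self pi_nonneg),
    intervalIntegral.integral_comp_mul_left (fun θ => 1 / (1 + a * cos θ ^ 2)) hk', mul_neg,
    ← neg_mul, hperiods, smul_eq_mul]
  field_simp
  ring

end Angular

section Radial

variable {F : Type*} [NormedAddCommGroup F] [NormedSpace ℝ F]

theorem integral_smul_comp_sq_Ioi (g : ℝ → F) :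
    ∫ r in Ioi (0 : ℝ), r • g (r ^ 2) = (2⁻¹ : ℝ) • ∫ u in Ioi (0 : ℝ), g u := by
  have hone : (2 : ℝ) - 1 = 1 := by norm_num
  rw [← integral_comp_rpow_Ioi_of_pos (g := g) two_pos, ← integral_smul]
  simp [smul_smul, hone]

theorem integrableOn_smul_comp_sq_Ioi_iff {g : ℝ → F} :
    IntegrableOn (fun r => r • g (r ^ 2)) (Ioi 0) ↔ IntegrableOn g (Ioi 0) := by
  rw [← integrableOn_Ioi_comp_rpow_iff' g two_ne_zero]
  norm_num

theorem integrableOn_one_div_sqrt_one_add_rpow {d : ℝ} (hd : 2 < d) :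
    IntegrableOn (fun u : ℝ => 1 / √(1 + u ^ d)) (Ioi 0) := by
  have hcont : ContinuousOn (fun u : ℝ => 1 / √(1 + u ^ d)) (Ici 0) := by
    refine continuousOn_const.div (ContinuousOn.sqrt ?_) fun u hu => ?_
    · exact continuousOn_const.add (continuousOn_id.rpow_const fun _ _ => .inr (by linarith))
    · have := rpow_nonneg hu d
      positivity
  have hdecay : (fun u : ℝ => 1 / √(1 + u ^ d)) =O[atTop] fun u => u ^ (-(d / 2)) := by
    refine Asymptotics.IsBigO.of_norm_eventuallyLE ?_
    filter_upwards [eventually_gt_atTop 0] with u hu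
    have hsqrt : u ^ (d / 2) = √(u ^ d) := by
      rw [sqrt_eq_rpow, ← rpow_mul hu.le, mul_one_div]
    rw [norm_of_nonneg (by positivity), rpow_neg hu.le, ← one_div, hsqrt]
    gcongr
    linarith
  exact ((hcont.locallyIntegrableOn measurableSet_Ici).integrableOn_of_isBigO_atTop hdecay
    (integrableAtFilter_rpow_atTop_iff.mpr (by linarith))).mono_set Ioi_subset_Ici_self

end Radial

theorem integrable_iff_integrableOn_smul_comp_polarCoord_symm {F : Type*} [NormedAddCommGroup F]
    [NormedSpace ℝ F] {g : ℝ × ℝ → F} :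
    Integrable g ↔
      IntegrableOn (fun p : ℝ × ℝ => p.1 • g (polarCoord.symm p)) polarCoord.target := by
  have hsource : IntegrableOn g polarCoord.source ↔ Integrable g := by
    rw [IntegrableOn, Measure.restrict_congr_set polarCoord_source_ae_eq_univ,
      Measure.restrict_univ]
  have hchange := integrableOn_image_iff_integrableOn_abs_det_fderiv_smul volume
    polarCoord.open_target.measurableSet
    (fun p _ => (hasFDerivAt_polarCoord_symm p).hasFDerivWithinAt) polarCoord.symm.injOn g
  rw [polarCoord.symm_image_target_eq_source] at hchange
  rw [← hsource, hchange]
  refine integrableOn_congr_fun (fun p hp => ?_) polarCoord.open_target.measurableSet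
  have hr : 0 < p.1 := hp.1
  simp only [det_fderivPolarCoordSymm, abs_of_pos hr]

/-- The density `r / (1 + (r ^ d * cos (k * θ)) ^ 2)` of `1 / (1 + f ^ 2)` in polar coordinates, for
the phase `f = r ^ d * cos (k * θ)`. The square of `r ^ d` is written `(r ^ 2) ^ d`, ready for the
substitution `u = r ^ 2`. -/
noncomputable def polarDensity (d : ℝ) (k : ℕ) (p : ℝ × ℝ) : ℝ :=
  p.1 * (1 / (1 + (p.1 ^ 2) ^ d * cos (k * p.2) ^ 2))

theorem integral_polarDensity {k : ℕ} (hk : k ≠ 0) (d r : ℝ) :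
    ∫ θ in Ioo (-π) π, polarDensity d k (r, θ) = 2 * π * (r • (1 / √(1 + (r ^ 2) ^ d))) := by
  have ha : -1 < (r ^ 2) ^ d := by linarith [rpow_nonneg (sq_nonneg r) d]
  simp only [polarDensity, integral_const_mul, integral_one_div_one_add_mul_cos_mul_sq ha hk,
    smul_eq_mul]
  ring

theorem integrable_polarDensity {d : ℝ} (hd : 2 < d) {k : ℕ} (hk : k ≠ 0) :
    Integrable (polarDensity d k)
      ((volume.restrict (Ioi 0)).prod (volume.restrict (Ioo (-π) π))) := by
  have hmeas : Measurable (polarDensity d k) := by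
    unfold polarDensity
    fun_prop
  rw [integrable_prod_iff hmeas.aestronglyMeasurable]
  refine ⟨ae_of_all _ fun r => ?_, ?_⟩
  · have hcont : Continuous fun θ => polarDensity d k (r, θ) :=
      continuous_const.mul <|
        continuous_const.div (by dsimp only; fun_prop) fun θ => by positivity
    exact hcont.integrableOn_Icc.mono_set Ioo_subset_Icc_self
  · refine ((integrableOn_smul_comp_sq_Ioi_iff.mpr
      (integrableOn_one_div_sqrt_one_add_rpow hd)).const_mul (2 * π)).congr ?_
    filter_upwards [ae_restrict_mem measurableSet_Ioi] with r (hr : 0 < r)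
    rw [← integral_polarDensity hk]
    refine integral_congr_ae (ae_of_all _ fun θ => (norm_of_nonneg ?_).symm)
    exact mul_nonneg hr.le (by positivity)

/-- The plane phases that read `r ^ d * cos (k * θ)` in polar coordinates: away from the origin
they are homogeneous of degree `d`, and for `k ≠ 0` they vanish on a cone of `2 * k` rays. The value
at the origin is left free. -/
def IsCosinePhase (d : ℝ) (k : ℕ) (f : ℝ × ℝ → ℝ) : Prop :=
  ∀ r θ : ℝ, 0 < r → f (polarCoord.symm (r, θ)) = r ^ d * cos (k * θ)

namespace IsCosinePhase

variable {d : ℝ} {k : ℕ} {f : ℝ × ℝ → ℝ}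

theorem eqOn_polarDensity (hf : IsCosinePhase d k f) :
    EqOn (fun p : ℝ × ℝ => p.1 • (1 / (1 + f (polarCoord.symm p) ^ 2))) (polarDensity d k)
      polarCoord.target := by
  rintro ⟨r, θ⟩ ⟨hr : 0 < r, -⟩
  simp only [polarDensity, hf r θ hr, mul_pow, rpow_pow_comm hr.le, smul_eq_mul]

theorem integrable_one_div_one_add_sq (hf : IsCosinePhase d k f) (hd : 2 < d) (hk : k ≠ 0) :
    Integrable fun p => 1 / (1 + f p ^ 2) := by
  rw [integrable_iff_integrableOn_smul_comp_polarCoord_symm,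
    integrableOn_congr_fun hf.eqOn_polarDensity polarCoord.open_target.measurableSet,
    IntegrableOn, polarCoord_target, Measure.volume_eq_prod, ← Measure.prod_restrict]
  exact integrable_polarDensity hd hk

theorem integral_one_div_one_add_sq (hf : IsCosinePhase d k f) (hd : 2 < d) (hk : k ≠ 0) :
    ∫ p, 1 / (1 + f p ^ 2) = π * ∫ u in Ioi (0 : ℝ), 1 / √(1 + u ^ d) := by
  calc ∫ p, 1 / (1 + f p ^ 2)
      = ∫ p in polarCoord.target, polarDensity d k p := by
        rw [← integral_comp_polarCoord_symm,
          setIntegral_congr_fun polarCoord.open_target.measurableSet hf.eqOn_polarDensity]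
    _ = ∫ r in Ioi (0 : ℝ), ∫ θ in Ioo (-π) π, polarDensity d k (r, θ) := by
        rw [polarCoord_target, Measure.volume_eq_prod, ← Measure.prod_restrict,
          integral_prod _ (integrable_polarDensity hd hk)]
    _ = 2 * π * ∫ r in Ioi (0 : ℝ), r • (1 / √(1 + (r ^ 2) ^ d)) := by
        simp only [integral_polarDensity hk, integral_const_mul]
    _ = π * ∫ u in Ioi (0 : ℝ), 1 / √(1 + u ^ d) := by
        rw [integral_smul_comp_sq_Ioi fun u => 1 / √(1 + u ^ d), smul_eq_mul]
        ring

end IsCosinePhase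

theorem isCosinePhase_pow_four_sub_pow_four :
    IsCosinePhase 4 2 fun p => p.1 ^ 4 - p.2 ^ 4 := by
  intro r θ _
  norm_num only [polarCoord_symm_apply, cos_two_mul', rpow_ofNat, Nat.cast_ofNat]
  linear_combination r ^ 4 * (cos θ ^ 2 - sin θ ^ 2) * sin_sq_add_cos_sq θ

/-- The degree-4 singularity example: `√z · ∫_{ℝ²} e^{-(x²+y²)}/(1+z²(x⁴-y⁴)²) dx dy`
tends to `π ∫_0^∞ du/√(1+u⁴)` as `z → ∞`. -/
theorem quartic_singularity_asymptotics :
    Tendsto (fun z : ℝ =>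
        Real.sqrt z * ∫ p : ℝ × ℝ,
          Real.exp (-(p.1 ^ 2 + p.2 ^ 2)) / (1 + z ^ 2 * (p.1 ^ 4 - p.2 ^ 4) ^ 2))
      atTop (nhds (Real.pi * ∫ u in Set.Ioi (0:ℝ), 1 / Real.sqrt (1 + u ^ 4))) := by
  have hphase := isCosinePhase_pow_four_sub_pow_four
  have hdeg : (2 : ℝ) < 4 := by norm_num
  have hhom (t : ℝ) (_ : 0 < t) (p : ℝ × ℝ) :
      (t • p).1 ^ 4 - (t • p).2 ^ 4 = t ^ (4 : ℝ) • (p.1 ^ 4 - p.2 ^ 4) := by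
    simp only [Prod.smul_fst, Prod.smul_snd, smul_eq_mul, rpow_ofNat]
    ring
  have hgauss (p : ℝ × ℝ) : ‖exp (-(p.1 ^ 2 + p.2 ^ 2))‖ ≤ 1 := by
    rw [norm_of_nonneg (exp_pos _).le, exp_le_one_iff, neg_nonpos]
    positivity
  have hlim := tendsto_rpow_smul_integral_smul_comp_smul_of_homogeneous four_pos hhom
    (h := fun t => 1 / (1 + t ^ 2)) (hphase.integrable_one_div_one_add_sq hdeg two_ne_zero)
    (by fun_prop) hgauss (by fun_prop)
  rw [hphase.integral_one_div_one_add_sq hdeg two_ne_zero] at hlim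
  have hsqrt (z : ℝ) : z ^ ((finrank ℝ (ℝ × ℝ) : ℝ) / 4) = √z := by
    norm_num [sqrt_eq_rpow]
  simp only [hsqrt] at hlim
  simpa [mul_pow, div_eq_mul_inv] using hlim
end
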